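/- Let λ > 0. With V_{j,ν}^n as defined (V_{j,ν}^n = U_{j,ν}^n for 0 ≤ j ≤ ⌊(n−1)/2⌋, and for n even V_{n/2}^n(x) = q_{n/2}(2‖x‖²−1) with q_k(s) = ∫_{−1}^s P_{k−1}^{(0,d/2)}(t) dt), one has: (i) for 1 ≤ j ≤ ⌊(n−1)/2⌋, ⟨V_{j,ν}^n, V_{j,ν}^n⟩_II = ⟨U_{j,ν}^n, U_{j,ν}^n⟩_I = 2j²λ/(n+(d−2)/2); and (ii) for n even, ⟨V_{n/2}^n, V_{n/2}^n⟩_II = 8λ/(n+(d−2)/2). -/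

import Mathlib

open MeasureTheory Metric MvPolynomial RealInnerProductSpace

noncomputable section

/-- Generalized binomial coefficient `C(z, k)` for real `z`. -/
def genBinom (z : ℝ) (k : ℕ) : ℝ := (∏ i ∈ Finset.range k, (z - i)) / (Nat.factorial k)

/-- The Jacobi polynomial `P_n^{(a,b)}`, normalized so that `P_n^{(a,b)}(1) = C(n+a, n)`. -/
def jacobiPoly (n : ℕ) (a b : ℝ) : Polynomial ℝ :=
  ∑ s ∈ Finset.range (n + 1),
    Polynomial.C (genBinom ((n : ℝ) + a) (n - s) * genBinom ((n : ℝ) + b) s) *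
      (Polynomial.C (2⁻¹) * (Polynomial.X - 1)) ^ s *
      (Polynomial.C (2⁻¹) * (Polynomial.X + 1)) ^ (n - s)

/-- The Jacobi polynomial as a real function. -/
def jacobiR (n : ℕ) (a b x : ℝ) : ℝ := (jacobiPoly n a b).eval x

/-- The Laplace operator on polynomials in `d` variables. -/
def mvLaplacian {d : ℕ} (p : MvPolynomial (Fin d) ℝ) : MvPolynomial (Fin d) ℝ :=
  ∑ i : Fin d, pderiv i (pderiv i p)

/-- The polynomial `‖x‖² = x₁² + ⋯ + x_d²`. -/
def sumSq (d : ℕ) : MvPolynomial (Fin d) ℝ := ∑ i : Fin d, X i ^ 2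

/-- `σ_m`, the dimension of the space of spherical harmonics of degree `m` in `d` variables. -/
def sigmaDim (d m : ℕ) : ℕ := (m + d - 1).choose (d - 1) - (m + d - 3).choose (d - 1)

/-- The surface area `ω_d = 2 π^{d/2} / Γ(d/2)` of the unit sphere `S^{d-1}`. -/
def omegaD (d : ℕ) : ℝ := 2 * Real.pi ^ ((d : ℝ) / 2) / Real.Gamma ((d : ℝ) / 2)

/-- Euclidean space `ℝ^d`. -/
abbrev Edim (d : ℕ) := EuclideanSpace ℝ (Fin d)

/-- Evaluation of a polynomial in `d` variables at a point of `ℝ^d`. -/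
def pEval {d : ℕ} (p : MvPolynomial (Fin d) ℝ) (x : Edim d) : ℝ := eval (fun i => x i) p

/-- The surface measure `dω` on the unit sphere `S^{d-1}`. -/
def sphMeasure (d : ℕ) : Measure (sphere (0 : Edim d) 1) :=
  (volume : Measure (Edim d)).toSphere

/-- The Sobolev inner product `⟨f,g⟩_I`. -/
def innerI (d : ℕ) (lam : ℝ) (f g : Edim d → ℝ) : ℝ :=
  (lam / omegaD d) * ∫ x in closedBall (0 : Edim d) 1, ⟪gradient f x, gradient g x⟫ +
    (1 / omegaD d) * ∫ y : sphere (0 : Edim d) 1, f y * g y ∂(sphMeasure d)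

/-- The Sobolev inner product `⟨f,g⟩_II`. -/
def innerII (d : ℕ) (lam : ℝ) (f g : Edim d → ℝ) : ℝ :=
  (lam / omegaD d) * ∫ x in closedBall (0 : Edim d) 1, ⟪gradient f x, gradient g x⟫ +
    f 0 * g 0

/-- The polynomials `U_{j,ν}^n`. -/
def Upoly (d : ℕ) (Y : (m : ℕ) → Fin (sigmaDim d m) → MvPolynomial (Fin d) ℝ)
    (n j : ℕ) (ν : Fin (sigmaDim d (n - 2 * j))) : MvPolynomial (Fin d) ℝ :=
  if j = 0 then Y (n - 2 * j) ν
  else (1 - sumSq d) *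
      Polynomial.aeval (2 * sumSq d - 1)
        (jacobiPoly (j - 1) 1 ((n : ℝ) - 2 * (j : ℝ) + ((d : ℝ) - 2) / 2)) *
      Y (n - 2 * j) ν


/-- Formal antiderivative of a one-variable polynomial (vanishing at `0`). -/
def polyAntideriv (p : Polynomial ℝ) : Polynomial ℝ :=
  p.sum fun n a => Polynomial.C (a / (n + 1)) * Polynomial.X ^ (n + 1)

/-- `q_0 = 1` and, for `k ≥ 1`, the polynomial `q_k(s) = ∫_{-1}^s P_{k-1}^{(0,d/2)}(t) dt`. -/
def qPoly (d k : ℕ) : Polynomial ℝ :=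
  if k = 0 then 1
  else polyAntideriv (jacobiPoly (k - 1) 0 ((d : ℝ) / 2)) -
    Polynomial.C ((polyAntideriv (jacobiPoly (k - 1) 0 ((d : ℝ) / 2))).eval (-1))

/-- The polynomials `V_{j,ν}^n`: `V_{j,ν}^n = U_{j,ν}^n` for `j ≤ ⌊(n-1)/2⌋` and, for `n`
even, `V_{n/2}^n(x) = q_{n/2}(2‖x‖²-1)`. -/
def Vpoly (d : ℕ) (Y : (m : ℕ) → Fin (sigmaDim d m) → MvPolynomial (Fin d) ℝ)
    (n j : ℕ) (ν : Fin (sigmaDim d (n - 2 * j))) : MvPolynomial (Fin d) ℝ :=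
  if 2 * j = n then Polynomial.aeval (2 * sumSq d - 1) (qPoly d (n / 2))
  else Upoly d Y n j ν

/-!
Both families have the form `G(2‖x‖² - 1) Y(x)` with `Y` harmonic and homogeneous of degree `m`
(`Y = 1` for `V_{n/2}^n`). Since `|∇(TY)|² = Y²|∇T|² + div(T²Y∇Y)` for harmonic `Y`, the divergence
theorem and Euler's identity turn the Dirichlet energy into
`(16 ∫₀¹ r^{2m+d+1} G'(2r² - 1)² dr + m G(1)²) ∫ Y² dω`. In both cases `G'` is a multiple of a
Jacobi polynomial `P_N^{(0,m+d/2)}`, whose norm evaluates the radial integral; either `m = 0` or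
`G(1) = 0`; and the function vanishes at the origin, so only the gradient term contributes.

For polynomials the divergence theorem on the ball needs no boundary theory: integrating
`∂ᵢ(p exp(-‖x‖²))` over the whole space and passing to polar coordinates, for homogeneous `p`,
compares the sphere integrals of `∂ᵢp` and `xᵢp`, and a second use of polar coordinates replaces the
former by an integral over the ball.
-/

/-! ### Jacobi polynomials -/

section Jacobi

open Finset.HasAntidiagonal (antidiagonal mem_antidiagonal)

lemma genBinom_zero (z : ℝ) : genBinom z 0 = 1 := by simp [genBinom]

lemma genBinom_succ_mul (z : ℝ) (k : ℕ) :
    genBinom z (k + 1) * (k + 1) = (z - k) * genBinom z k := by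
  have : (k.factorial : ℝ) ≠ 0 := by positivity
  rw [genBinom, genBinom, Finset.prod_range_succ, Nat.factorial_succ]
  push_cast
  field_simp

lemma genBinom_add_one_succ_mul (z : ℝ) (k : ℕ) :
    genBinom (z + 1) (k + 1) * (k + 1) = (z + 1) * genBinom z k := by
  have hk : (k.factorial : ℝ) ≠ 0 := by positivity
  have hprod : ∏ i ∈ Finset.range k, (z + 1 - (i + 1 : ℕ)) = ∏ i ∈ Finset.range k, (z - i) :=
    Finset.prod_congr rfl fun i _ => by push_cast; ring
  rw [genBinom, genBinom, Finset.prod_range_succ', Nat.factorial_succ, hprod]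
  push_cast
  field_simp
  ring

lemma genBinom_add_one_succ (z : ℝ) (k : ℕ) :
    genBinom (z + 1) (k + 1) = genBinom z k + genBinom z (k + 1) := by
  have hk : (k : ℝ) + 1 ≠ 0 := by positivity
  apply mul_right_cancel₀ hk
  linear_combination genBinom_add_one_succ_mul z k - genBinom_succ_mul z k

lemma genBinom_add_one_mul (z : ℝ) (k : ℕ) :
    genBinom (z + 1) k * (z + 1 - k) = (z + 1) * genBinom z k := by
  linear_combination genBinom_add_one_succ_mul z k - genBinom_succ_mul (z + 1) k

lemma genBinom_self (n : ℕ) : genBinom n n = 1 := by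
  induction n with
  | zero => exact genBinom_zero _
  | succ n ih =>
    have hn : (n : ℝ) + 1 ≠ 0 := by positivity
    apply mul_right_cancel₀ hn
    rw [Nat.cast_add_one, genBinom_add_one_succ_mul, ih, mul_one, one_mul]

lemma natDegree_jacobiPoly_le (n : ℕ) (a b : ℝ) : (jacobiPoly n a b).natDegree ≤ n := by
  refine Polynomial.natDegree_sum_le_of_forall_le _ _ fun s hs => ?_
  have hsn : s + (n - s) = n := Nat.add_sub_cancel' (Finset.mem_range_succ_iff.1 hs)
  refine le_of_le_of_eq ?_ hsn
  compute_degree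

lemma eval_jacobiPoly (n : ℕ) (a b t : ℝ) : (jacobiPoly n a b).eval t =
    ∑ x ∈ antidiagonal n, genBinom (n + a) x.2 * genBinom (n + b) x.1 *
      ((t - 1) / 2) ^ x.1 * ((t + 1) / 2) ^ x.2 := by
  rw [jacobiPoly, Polynomial.eval_finsetSum, Finset.Nat.sum_antidiagonal_eq_sum_range_succ_mk]
  refine Finset.sum_congr rfl fun s _ => ?_
  simp [inv_mul_eq_div]

lemma eval_one_jacobiPoly (n : ℕ) (a b : ℝ) :
    (jacobiPoly n a b).eval 1 = genBinom (n + a) n := by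
  rw [eval_jacobiPoly, Finset.sum_eq_single (0, n)]
  · simp [genBinom_zero]
  · rintro ⟨i, k⟩ hx hne
    have hi : i ≠ 0 := by
      rintro rfl
      simp_all
    simp [hi]
  · simp

lemma eval_derivative_jacobiPoly (n : ℕ) (a b t : ℝ) : (jacobiPoly n a b).derivative.eval t =
    2⁻¹ * ∑ x ∈ antidiagonal n, genBinom (n + a) x.2 * genBinom (n + b) x.1 *
      (x.1 * ((t - 1) / 2) ^ (x.1 - 1) * ((t + 1) / 2) ^ x.2 +
        x.2 * ((t - 1) / 2) ^ x.1 * ((t + 1) / 2) ^ (x.2 - 1)) := by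
  have hu : HasDerivAt (fun t : ℝ => (t - 1) / 2) 2⁻¹ t := by
    simpa using ((hasDerivAt_id t).sub_const 1).div_const 2
  have hv : HasDerivAt (fun t : ℝ => (t + 1) / 2) 2⁻¹ t := by
    simpa using ((hasDerivAt_id t).add_const 1).div_const 2
  refine ((jacobiPoly n a b).hasDerivAt t).unique ?_
  simp_rw [eval_jacobiPoly, Finset.mul_sum]
  refine HasDerivAt.fun_sum fun x _ => ?_
  exact (((hu.fun_pow x.1).const_mul (genBinom (n + a) x.2 * genBinom (n + b) x.1)).fun_mul
    (hv.fun_pow x.2)).congr_deriv (by ring)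

/-- Euler's identity for homogeneous polynomials in two variables, at the level of summands. -/
lemma succ_mul_sum_antidiagonal_succ {R : Type*} [CommSemiring R] (n : ℕ) (f : ℕ × ℕ → R) :
    (n + 1) * ∑ x ∈ antidiagonal (n + 1), f x = ∑ x ∈ antidiagonal n,
      ((x.1 + 1) * f (x.1 + 1, x.2) + (x.2 + 1) * f (x.1, x.2 + 1)) := by
  have hfst : ∑ x ∈ antidiagonal (n + 1), (x.1 : R) * f x =
      ∑ x ∈ antidiagonal n, (x.1 + 1) * f (x.1 + 1, x.2) := by
    rw [Finset.Nat.sum_antidiagonal_succ]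
    simp
  have hsnd : ∑ x ∈ antidiagonal (n + 1), (x.2 : R) * f x =
      ∑ x ∈ antidiagonal n, (x.2 + 1) * f (x.1, x.2 + 1) := by
    rw [Finset.Nat.sum_antidiagonal_succ']
    simp
  rw [Finset.sum_add_distrib, ← hfst, ← hsnd, ← Finset.sum_add_distrib, Finset.mul_sum]
  refine Finset.sum_congr rfl fun x hx => ?_
  rw [← add_mul, ← Nat.cast_add, mem_antidiagonal.1 hx, Nat.cast_add_one]

lemma succ_mul_eval_jacobiPoly_succ (n : ℕ) (a b t : ℝ) :
    (n + 1) * (jacobiPoly (n + 1) a b).eval t = ∑ x ∈ antidiagonal n,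
      genBinom (n + (a + 1)) x.2 * genBinom (n + (b + 1)) x.1 *
        ((x.1 + a + 1) * ((t - 1) / 2) ^ x.1 * ((t + 1) / 2) ^ (x.2 + 1) +
          (x.2 + b + 1) * ((t - 1) / 2) ^ (x.1 + 1) * ((t + 1) / 2) ^ x.2) := by
  rw [eval_jacobiPoly, succ_mul_sum_antidiagonal_succ]
  refine Finset.sum_congr rfl fun ⟨i, k⟩ hx => ?_
  have hn : (n : ℝ) = i + k := mod_cast (mem_antidiagonal.1 hx).symm
  have ha : genBinom (n + (a + 1)) (k + 1) * (k + 1) = (i + a + 1) * genBinom (n + (a + 1)) k := by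
    rw [genBinom_succ_mul, hn]
    ring
  have hb : genBinom (n + (b + 1)) (i + 1) * (i + 1) = (k + b + 1) * genBinom (n + (b + 1)) i := by
    rw [genBinom_succ_mul, hn]
    ring
  simp only [Nat.cast_add_one, add_assoc, add_comm (1 : ℝ)]
  simp only [add_assoc] at ha hb
  linear_combination
    genBinom (n + (b + 1)) i * ((t - 1) / 2) ^ i * ((t + 1) / 2) ^ (k + 1) * ha +
      genBinom (n + (a + 1)) k * ((t - 1) / 2) ^ (i + 1) * ((t + 1) / 2) ^ k * hb

lemma jacobiPoly_raising (n : ℕ) (a b t : ℝ) :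
    (1 - t ^ 2) * (jacobiPoly n (a + 1) (b + 1)).derivative.eval t +
      (b - a - (a + b + 2) * t) * (jacobiPoly n (a + 1) (b + 1)).eval t =
    -(2 * (n + 1)) * (jacobiPoly (n + 1) a b).eval t := by
  rw [eval_derivative_jacobiPoly, eval_jacobiPoly, neg_mul, mul_assoc 2,
    succ_mul_eval_jacobiPoly_succ, ← neg_mul]
  simp only [Finset.mul_sum, ← Finset.sum_add_distrib]
  refine Finset.sum_congr rfl fun ⟨i, k⟩ _ => ?_
  have hi : (i : ℝ) * ((t - 1) / 2) ^ (i - 1) * ((t - 1) / 2) = i * ((t - 1) / 2) ^ i := by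
    cases i <;> simp [pow_succ, mul_assoc]
  have hk : (k : ℝ) * ((t + 1) / 2) ^ (k - 1) * ((t + 1) / 2) = k * ((t + 1) / 2) ^ k := by
    cases k <;> simp [pow_succ, mul_assoc]
  simp only
  linear_combination genBinom (n + (a + 1)) k * genBinom (n + (b + 1)) i *
    (-2 * ((t + 1) / 2) ^ (k + 1) * hi - 2 * ((t - 1) / 2) ^ (i + 1) * hk)

lemma succ_mul_eval_jacobiPoly_add_one (n : ℕ) (a b t : ℝ) :
    (n + a + 1) * (jacobiPoly n a (b + 1)).eval t = ∑ x ∈ antidiagonal n,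
      (x.1 + a + 1) * genBinom (n + (a + 1)) x.2 * genBinom (n + b + 1) x.1 *
        ((t - 1) / 2) ^ x.1 * ((t + 1) / 2) ^ x.2 := by
  rw [eval_jacobiPoly, Finset.mul_sum]
  refine Finset.sum_congr rfl fun ⟨i, k⟩ hx => ?_
  have hn : (n : ℝ) = i + k := mod_cast (mem_antidiagonal.1 hx).symm
  have hk : (n + a + 1) * genBinom (n + a) k = (i + a + 1) * genBinom (n + (a + 1)) k := by
    rw [← genBinom_add_one_mul, ← add_assoc, hn]
    ring
  simp only [← add_assoc] at hk ⊢
  linear_combination genBinom (n + b + 1) i * ((t - 1) / 2) ^ i * ((t + 1) / 2) ^ k * hk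

lemma sum_antidiagonal_genBinom_sub (n : ℕ) (a b u v : ℝ) :
    ∑ x ∈ antidiagonal n, (x.1 + a + 1) * genBinom (n + (a + 1)) x.2 *
        (genBinom (n + b + 1) x.1 - genBinom (n + b) x.1) * u ^ x.1 * v ^ x.2 =
      ∑ x ∈ antidiagonal n, x.2 * genBinom (n + (a + 1)) x.2 * genBinom (n + b) x.1 *
        u ^ (x.1 + 1) * v ^ (x.2 - 1) := by
  cases n with
  | zero => simp [genBinom_zero]
  | succ n =>
    rw [Finset.Nat.sum_antidiagonal_succ, Finset.Nat.sum_antidiagonal_succ' (n := n)]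
    simp only [genBinom_zero, genBinom_add_one_succ, sub_self, mul_zero, zero_mul, zero_add,
      CharP.cast_eq_zero, add_tsub_cancel_right]
    refine Finset.sum_congr rfl fun ⟨i, k⟩ hx => ?_
    have hn : (n : ℝ) = i + k := mod_cast (mem_antidiagonal.1 hx).symm
    have hk := genBinom_succ_mul ((n + 1 : ℕ) + (a + 1)) k
    push_cast at hk ⊢
    rw [mul_comm ((k : ℝ) + 1), hk, hn]
    ring

lemma jacobiPoly_lowering (n : ℕ) (a b t : ℝ) :
    (1 - t) * (jacobiPoly n (a + 1) b).derivative.eval t -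
      (a + 1) * (jacobiPoly n (a + 1) b).eval t =
    -(n + a + 1) * (jacobiPoly n a (b + 1)).eval t := by
  have hshift := sub_eq_zero.2 (sum_antidiagonal_genBinom_sub n a b ((t - 1) / 2) ((t + 1) / 2))
  rw [neg_mul, succ_mul_eval_jacobiPoly_add_one, eval_derivative_jacobiPoly, eval_jacobiPoly,
    eq_neg_iff_add_eq_zero, ← hshift]
  simp only [Finset.mul_sum, ← Finset.sum_sub_distrib, ← Finset.sum_add_distrib]
  refine Finset.sum_congr rfl fun ⟨i, k⟩ _ => ?_
  have hi : (i : ℝ) * ((t - 1) / 2) ^ (i - 1) * ((t - 1) / 2) = i * ((t - 1) / 2) ^ i := by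
    cases i <;> simp [pow_succ, mul_assoc]
  simp only
  linear_combination - genBinom (n + (a + 1)) k * genBinom (n + b) i * ((t + 1) / 2) ^ k * hi

end Jacobi

/-! ### Orthogonality and norm of Jacobi polynomials -/

/-- The Jacobi weight `(1 - t)^a (1 + t)^b` on `[-1, 1]`. -/
def jacobiWeight (a b t : ℝ) : ℝ := (1 - t) ^ a * (1 + t) ^ b

lemma jacobiWeight_add_one_one {t : ℝ} (a b : ℝ) (ht : t ∈ Set.Ioo (-1 : ℝ) 1) :
    jacobiWeight (a + 1) (b + 1) t = (1 - t ^ 2) * jacobiWeight a b t := by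
  rw [jacobiWeight, jacobiWeight, Real.rpow_add_one (by linarith [ht.2]),
    Real.rpow_add_one (by linarith [ht.1])]
  ring

lemma intervalIntegrable_jacobiWeight {a b : ℝ} (ha : -1 < a) (hb : -1 < b) :
    IntervalIntegrable (jacobiWeight a b) volume (-1) 1 := by
  have hleft : IntervalIntegrable (jacobiWeight a b) volume (-1) 0 := by
    have h : IntervalIntegrable (fun t : ℝ => (1 + t) ^ b) volume (-1) 0 := by
      simpa [add_comm] using
        (intervalIntegral.intervalIntegrable_rpow' hb (a := 0) (b := 1)).comp_add_left 1
    refine h.continuousOn_mul fun t ht => ?_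
    rw [Set.uIcc_of_le (by norm_num)] at ht
    exact (ContinuousAt.rpow_const (by fun_prop) (.inl (by linarith [ht.2]))).continuousWithinAt
  have hright : IntervalIntegrable (jacobiWeight a b) volume 0 1 := by
    have h : IntervalIntegrable (fun t : ℝ => (1 - t) ^ a) volume 0 1 := by
      simpa using
        ((intervalIntegral.intervalIntegrable_rpow' ha (a := 0) (b := 1)).comp_sub_left 1).symm
    refine h.mul_continuousOn fun t ht => ?_
    rw [Set.uIcc_of_le (by norm_num)] at ht
    exact (ContinuousAt.rpow_const (by fun_prop) (.inl (by linarith [ht.1]))).continuousWithinAt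
  exact hleft.trans hright

lemma intervalIntegrable_jacobiWeight_mul {a b : ℝ} (ha : -1 < a) (hb : -1 < b)
    (p : Polynomial ℝ) :
    IntervalIntegrable (fun t => jacobiWeight a b t * p.eval t) volume (-1) 1 :=
  (intervalIntegrable_jacobiWeight ha hb).mul_continuousOn p.continuousOn

lemma continuous_jacobiWeight {a b : ℝ} (ha : 0 ≤ a) (hb : 0 ≤ b) :
    Continuous (jacobiWeight a b) :=
  ((continuous_const.sub continuous_id).rpow_const fun _ => .inr ha).mul
    ((continuous_const.add continuous_id).rpow_const fun _ => .inr hb)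

lemma hasDerivAt_jacobiWeight {t : ℝ} (a b : ℝ) (ht : t ∈ Set.Ioo (-1 : ℝ) 1) :
    HasDerivAt (jacobiWeight (a + 1) (b + 1))
      ((b - a - (a + b + 2) * t) * jacobiWeight a b t) t := by
  have hl : 1 - t ≠ 0 := by linarith [ht.2]
  have hr : 1 + t ≠ 0 := by linarith [ht.1]
  have h := (((hasDerivAt_id t).const_sub 1).rpow_const (p := a + 1) (.inl hl)).mul
    (((hasDerivAt_id t).const_add 1).rpow_const (p := b + 1) (.inl hr))
  refine h.congr_deriv ?_
  simp only [id, add_sub_cancel_right, Real.rpow_add_one hl, Real.rpow_add_one hr, jacobiWeight]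
  ring

lemma hasDerivAt_jacobiWeight_mul_jacobiPoly {t : ℝ} (n : ℕ) (a b : ℝ)
    (ht : t ∈ Set.Ioo (-1 : ℝ) 1) :
    HasDerivAt (fun t => jacobiWeight (a + 1) (b + 1) t * (jacobiPoly n (a + 1) (b + 1)).eval t)
      (-(2 * (n + 1)) * (jacobiWeight a b t * (jacobiPoly (n + 1) a b).eval t)) t := by
  refine ((hasDerivAt_jacobiWeight a b ht).mul (Polynomial.hasDerivAt _ t)).congr_deriv ?_
  rw [jacobiWeight_add_one_one a b ht]
  linear_combination jacobiWeight a b t * jacobiPoly_raising n a b t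

lemma integral_jacobiWeight_mul_jacobiPoly_succ_mul {a b : ℝ} (ha : -1 < a) (hb : -1 < b) (n : ℕ)
    (q : Polynomial ℝ) :
    2 * (n + 1) * ∫ t in -1..1, jacobiWeight a b t * (jacobiPoly (n + 1) a b * q).eval t =
      ∫ t in -1..1, jacobiWeight (a + 1) (b + 1) t *
        (jacobiPoly n (a + 1) (b + 1) * q.derivative).eval t := by
  have ha0 : 0 < a + 1 := by linarith
  have hb0 : 0 < b + 1 := by linarith
  have hcont : Continuous fun t =>
      jacobiWeight (a + 1) (b + 1) t * (jacobiPoly n (a + 1) (b + 1)).eval t * q.eval t :=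
    ((continuous_jacobiWeight ha0.le hb0.le).mul (Polynomial.continuous _)).mul q.continuous
  have hderiv : ∀ t ∈ Set.Ioo (-1 : ℝ) 1, HasDerivAt
      (fun t => jacobiWeight (a + 1) (b + 1) t * (jacobiPoly n (a + 1) (b + 1)).eval t * q.eval t)
      (-(2 * (n + 1)) * (jacobiWeight a b t * (jacobiPoly (n + 1) a b * q).eval t) +
        jacobiWeight (a + 1) (b + 1) t *
          (jacobiPoly n (a + 1) (b + 1) * q.derivative).eval t) t := fun t ht =>
    ((hasDerivAt_jacobiWeight_mul_jacobiPoly n a b ht).mul (q.hasDerivAt t)).congr_deriv (by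
      simp only [Polynomial.eval_mul]
      ring)
  have hint := (intervalIntegrable_jacobiWeight_mul ha hb
    (jacobiPoly (n + 1) a b * q)).const_mul (-(2 * ((n : ℝ) + 1)))
  have hint' := intervalIntegrable_jacobiWeight_mul (a := a + 1) (b := b + 1)
    (by linarith) (by linarith) (jacobiPoly n (a + 1) (b + 1) * q.derivative)
  have hFTC := intervalIntegral.integral_eq_sub_of_hasDerivAt_of_le (by norm_num)
    hcont.continuousOn hderiv (hint.add hint')
  rw [intervalIntegral.integral_add hint hint', intervalIntegral.integral_const_mul] at hFTC
  simp only [jacobiWeight, sub_self, add_neg_cancel, Real.zero_rpow ha0.ne',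
    Real.zero_rpow hb0.ne', zero_mul, mul_zero] at hFTC ⊢
  linarith

lemma integral_jacobiWeight_mul_jacobiPoly_mul_eq_zero {a b : ℝ} (ha : -1 < a) (hb : -1 < b)
    {n : ℕ} {q : Polynomial ℝ} (hq : q.degree < n) :
    ∫ t in -1..1, jacobiWeight a b t * (jacobiPoly n a b * q).eval t = 0 := by
  induction n generalizing a b q with
  | zero =>
    obtain rfl : q = 0 := by simpa using hq
    simp
  | succ n ih =>
    have hn : 2 * ((n : ℝ) + 1) ≠ 0 := by positivity
    have hq' : q.derivative.degree < n := by
      rw [Polynomial.degree_lt_iff_coeff_zero] at hq ⊢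
      intro k hk
      rw [Polynomial.coeff_derivative, hq (k + 1) (by omega), zero_mul]
    rw [← mul_right_inj' hn, integral_jacobiWeight_mul_jacobiPoly_succ_mul ha hb,
      ih (by linarith) (by linarith) hq', mul_zero]

lemma degree_one_add_X_mul_derivative_sub_lt {p : Polynomial ℝ} {n : ℕ} (hp : p.natDegree ≤ n) :
    ((1 + Polynomial.X) * p.derivative - Polynomial.C (n : ℝ) * p).degree < (n : WithBot ℕ) := by
  rw [Polynomial.degree_lt_iff_coeff_zero]
  intro k hk
  have hsucc : p.coeff (k + 1) = 0 := Polynomial.coeff_eq_zero_of_natDegree_lt (by omega)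
  have hcoeff : ((1 + Polynomial.X) * p.derivative - Polynomial.C (n : ℝ) * p).coeff k =
      (k - n) * p.coeff k := by
    rw [add_mul, one_mul, Polynomial.coeff_sub, Polynomial.coeff_add, Polynomial.coeff_C_mul,
      Polynomial.coeff_derivative, hsucc]
    cases k with
    | zero => simp
    | succ k =>
      rw [Polynomial.coeff_X_mul, Polynomial.coeff_derivative]
      push_cast
      ring
  obtain rfl | hlt := hk.eq_or_lt
  · rw [hcoeff, sub_self, zero_mul]
  · rw [hcoeff, Polynomial.coeff_eq_zero_of_natDegree_lt (hp.trans_lt hlt), mul_zero]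

lemma hasDerivAt_rpow_mul_eval_sq {t : ℝ} (ht : 1 + t ≠ 0) (b c : ℝ) (p : Polynomial ℝ) :
    HasDerivAt (fun t => (1 + t) ^ (b + 1) * p.eval t ^ 2)
      ((2 * c + b + 1) * ((1 + t) ^ b * (p ^ 2).eval t) + 2 * ((1 + t) ^ b *
        (p * ((1 + Polynomial.X) * p.derivative - Polynomial.C c * p)).eval t)) t := by
  refine ((((hasDerivAt_id t).const_add 1).rpow_const (p := b + 1) (.inl ht)).mul
    ((p.hasDerivAt t).fun_pow 2)).congr_deriv ?_
  simp only [id, add_sub_cancel_right, Real.rpow_add_one ht, Polynomial.eval_mul,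
    Polynomial.eval_sub, Polynomial.eval_add, Polynomial.eval_pow, Polynomial.eval_one,
    Polynomial.eval_X, Polynomial.eval_C]
  push_cast
  ring

/-- Since `P(1) = 1`, the fundamental theorem for `(1 + t)^(b+1) P²` expresses the norm through
`∫ (1 + t)^b P ((1 + t) P')`, and `(1 + t) P' - n P` is orthogonal to `P`. -/
lemma integral_rpow_mul_jacobiPoly_sq {b : ℝ} (hb : -1 < b) (n : ℕ) :
    ∫ t in -1..1, (1 + t) ^ b * (jacobiPoly n 0 b).eval t ^ 2 =
      2 ^ (b + 1) / (2 * n + b + 1) := by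
  have hb0 : 0 < b + 1 := by linarith
  set P := jacobiPoly n 0 b with hP
  set Q := (1 + Polynomial.X) * P.derivative - Polynomial.C (n : ℝ) * P
  have hweight (p : Polynomial ℝ) (t : ℝ) :
      jacobiWeight 0 b t * p.eval t = (1 + t) ^ b * p.eval t := by
    rw [jacobiWeight, Real.rpow_zero, one_mul]
  have horth : ∫ t in -1..1, (1 + t) ^ b * (P * Q).eval t = 0 := by
    simpa only [hweight] using integral_jacobiWeight_mul_jacobiPoly_mul_eq_zero (a := 0)
      (by norm_num) hb
      (degree_one_add_X_mul_derivative_sub_lt (natDegree_jacobiPoly_le n 0 b))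
  have hcont : Continuous fun t : ℝ => (1 + t) ^ (b + 1) * P.eval t ^ 2 :=
    ((continuous_const.add continuous_id).rpow_const fun _ => .inr hb0.le).mul
      (P.continuous.pow 2)
  have hint (p : Polynomial ℝ) :
      IntervalIntegrable (fun t => (1 + t) ^ b * p.eval t) volume (-1) 1 := by
    simpa only [hweight] using intervalIntegrable_jacobiWeight_mul (a := 0) (by norm_num) hb p
  have hFTC := intervalIntegral.integral_eq_sub_of_hasDerivAt_of_le (by norm_num)
    hcont.continuousOn
    (fun t ht => hasDerivAt_rpow_mul_eval_sq (by linarith [ht.1] : 0 < 1 + t).ne' b n P)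
    (((hint (P ^ 2)).const_mul (2 * n + b + 1)).add ((hint (P * Q)).const_mul 2))
  have hP1 : P.eval 1 = 1 := by rw [hP, eval_one_jacobiPoly, add_zero, genBinom_self]
  rw [intervalIntegral.integral_add ((hint _).const_mul _) ((hint _).const_mul _),
    intervalIntegral.integral_const_mul, intervalIntegral.integral_const_mul, horth, hP1,
    add_neg_cancel, Real.zero_rpow hb0.ne'] at hFTC
  rw [eq_div_iff (by linarith [n.cast_nonneg (α := ℝ)] : (0 : ℝ) < 2 * n + b + 1).ne']
  simp only [Polynomial.eval_pow] at hFTC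
  norm_num at hFTC
  linarith

lemma integral_pow_mul_comp_two_mul_sq_sub_one (k : ℕ) {f : ℝ → ℝ} (hf : Continuous f) :
    4 * 2 ^ ((k : ℝ) / 2) * ∫ r in (0 : ℝ)..1, r ^ (k + 1) * f (2 * r ^ 2 - 1) =
      ∫ t in -1..1, (1 + t) ^ ((k : ℝ) / 2) * f t := by
  have hsub : ∀ r : ℝ, HasDerivAt (fun r => 2 * r ^ 2 - 1) (4 * r) r := fun r =>
    (((hasDerivAt_pow 2 r).const_mul 2).sub_const 1).congr_deriv (by norm_num; ring)
  have hg : Continuous fun t : ℝ => (1 + t) ^ ((k : ℝ) / 2) * f t :=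
    ((continuous_const.add continuous_id).rpow_const fun _ => .inr (by positivity)).mul hf
  have hchange := intervalIntegral.integral_comp_mul_deriv (a := 0) (b := 1)
    (fun r _ => hsub r) (by fun_prop) hg
  norm_num at hchange
  rw [← hchange, ← intervalIntegral.integral_const_mul]
  refine intervalIntegral.integral_congr fun r hr => ?_
  rw [Set.uIcc_of_le zero_le_one] at hr
  have hpow : (2 * r ^ 2) ^ ((k : ℝ) / 2) = 2 ^ ((k : ℝ) / 2) * r ^ k := by
    rw [Real.mul_rpow zero_le_two (by positivity), ← Real.rpow_natCast_mul hr.1,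
      ← Real.rpow_natCast]
    congr 2
    push_cast
    ring
  simp only [hpow]
  ring

lemma integral_pow_mul_jacobiPoly_sq (n k : ℕ) :
    ∫ r in (0 : ℝ)..1, r ^ (k + 1) * (jacobiPoly n 0 (k / 2)).eval (2 * r ^ 2 - 1) ^ 2 =
      1 / (2 * (2 * n + k / 2 + 1)) := by
  have hk : (0 : ℝ) ≤ k / 2 := by positivity
  have hpos : (0 : ℝ) < 2 ^ ((k : ℝ) / 2) := by positivity
  have hchange := integral_pow_mul_comp_two_mul_sq_sub_one k
    (f := fun t => (jacobiPoly n 0 (k / 2)).eval t ^ 2) (by fun_prop)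
  rw [integral_rpow_mul_jacobiPoly_sq (by linarith), Real.rpow_add_one two_ne_zero] at hchange
  apply mul_left_cancel₀ (mul_pos four_pos hpos).ne'
  rw [hchange]
  field_simp
  ring

lemma derivative_one_sub_X_mul_jacobiPoly (n : ℕ) (b : ℝ) :
    Polynomial.derivative ((1 - Polynomial.X) * jacobiPoly n 1 b) =
      Polynomial.C (-(n + 1 : ℝ)) * jacobiPoly n 0 (b + 1) := by
  refine Polynomial.funext fun t => ?_
  have h := jacobiPoly_lowering n 0 b t
  simp only [zero_add, add_zero] at h
  simp only [Polynomial.derivative_mul, Polynomial.derivative_sub, Polynomial.derivative_one,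
    Polynomial.derivative_X, Polynomial.eval_add, Polynomial.eval_mul, Polynomial.eval_sub,
    Polynomial.eval_zero, Polynomial.eval_one, Polynomial.eval_X, Polynomial.eval_C]
  linear_combination h

/-! ### Evaluation of polynomials on Euclidean space -/

section PolynomialEvaluation

variable {d : ℕ}

lemma pEval_mul (p q : MvPolynomial (Fin d) ℝ) (x : Edim d) :
    pEval (p * q) x = pEval p x * pEval q x :=
  map_mul _ p q

lemma pEval_pow (p : MvPolynomial (Fin d) ℝ) (k : ℕ) (x : Edim d) :
    pEval (p ^ k) x = pEval p x ^ k :=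
  map_pow _ p k

lemma pEval_add (p q : MvPolynomial (Fin d) ℝ) (x : Edim d) :
    pEval (p + q) x = pEval p x + pEval q x :=
  map_add _ p q

lemma pEval_sum {ι : Type*} (s : Finset ι) (p : ι → MvPolynomial (Fin d) ℝ) (x : Edim d) :
    pEval (∑ i ∈ s, p i) x = ∑ i ∈ s, pEval (p i) x :=
  map_sum _ p s

lemma pEval_C (a : ℝ) (x : Edim d) : pEval (C a) x = a := eval_C a

lemma pEval_X (i : Fin d) (x : Edim d) : pEval (X i) x = x i := eval_X i

lemma pEval_sumSq (x : Edim d) : pEval (sumSq d) x = ‖x‖ ^ 2 := by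
  simp [pEval, sumSq, EuclideanSpace.real_norm_sq_eq]

lemma pEval_aeval (G : Polynomial ℝ) (q : MvPolynomial (Fin d) ℝ) (x : Edim d) :
    pEval (Polynomial.aeval q G) x = G.eval (pEval q x) := by
  have h := Polynomial.hom_eval₂ G (algebraMap ℝ (MvPolynomial (Fin d) ℝ)) (eval fun i => x i) q
  have hid : (eval fun i => x i).comp (algebraMap ℝ (MvPolynomial (Fin d) ℝ)) = RingHom.id ℝ := by
    ext
    simp
  rwa [hid] at h

lemma hasFDerivAt_pEval (p : MvPolynomial (Fin d) ℝ) (x : Edim d) :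
    HasFDerivAt (pEval p)
      (∑ i, pEval (pderiv i p) x • (EuclideanSpace.proj i : Edim d →L[ℝ] ℝ)) x := by
  induction p using MvPolynomial.induction_on with
  | C a =>
    simp only [funext (pEval_C a), pderiv_C]
    simpa [pEval] using hasFDerivAt_const a x
  | add p q hp hq =>
    simp only [funext (pEval_add p q), map_add, pEval_add, add_smul, Finset.sum_add_distrib]
    exact hp.fun_add hq
  | mul_X p j hp =>
    have hX : HasFDerivAt (pEval (X j)) (EuclideanSpace.proj j : Edim d →L[ℝ] ℝ) x := by
      rw [funext (pEval_X j)]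
      exact (EuclideanSpace.proj j : Edim d →L[ℝ] ℝ).hasFDerivAt
    rw [funext (pEval_mul p (X j))]
    refine (hp.fun_mul hX).congr_fderiv ?_
    have hj : ∑ i, pEval (pderiv i (X j)) x • (EuclideanSpace.proj i : Edim d →L[ℝ] ℝ) =
        EuclideanSpace.proj j := by
      rw [Finset.sum_eq_single j (fun i _ hi => by simp [pderiv_X_of_ne hi.symm, pEval]) (by simp)]
      simp [pEval]
    simp only [Derivation.leibniz, smul_eq_mul, pEval_add, pEval_mul, add_smul,
      Finset.sum_add_distrib, mul_smul, ← Finset.smul_sum, hj]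

lemma continuous_pEval (p : MvPolynomial (Fin d) ℝ) : Continuous (pEval p : Edim d → ℝ) :=
  continuous_iff_continuousAt.2 fun x => (hasFDerivAt_pEval p x).continuousAt

lemma fderiv_pEval_single (p : MvPolynomial (Fin d) ℝ) (x : Edim d) (i : Fin d) :
    fderiv ℝ (pEval p) x (EuclideanSpace.single i 1) = pEval (pderiv i p) x := by
  simp [(hasFDerivAt_pEval p x).fderiv]

lemma inner_gradient_pEval_self (p : MvPolynomial (Fin d) ℝ) (x : Edim d) :
    ⟪gradient (pEval p) x, gradient (pEval p) x⟫ = pEval (∑ i, pderiv i p ^ 2) x := by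
  have h : HasGradientAt (pEval p) (WithLp.toLp 2 fun i => pEval (pderiv i p) x) x := by
    rw [hasGradientAt_iff_hasFDerivAt]
    refine (hasFDerivAt_pEval p x).congr_fderiv ?_
    ext v
    simp [PiLp.inner_apply, mul_comm]
  rw [h.gradient, pEval_sum, PiLp.inner_apply]
  simp [pEval_pow]

lemma pEval_smul {m : ℕ} {p : MvPolynomial (Fin d) ℝ} (hp : p.IsHomogeneous m)
    (r : ℝ) (x : Edim d) : pEval p (r • x) = r ^ m * pEval p x := by
  simp only [pEval, MvPolynomial.eval_eq, Finset.mul_sum, PiLp.smul_apply, smul_eq_mul, mul_pow,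
    Finset.prod_mul_distrib, Finset.prod_pow_eq_pow_sum]
  refine Finset.sum_congr rfl fun s hs => ?_
  rw [← hp.degree_eq_sum_deg_support hs]
  ring

lemma pEval_zero_of_isHomogeneous {m : ℕ} {p : MvPolynomial (Fin d) ℝ} (hp : p.IsHomogeneous m)
    (hm : m ≠ 0) : pEval p 0 = 0 := by
  simpa [hm] using pEval_smul hp 0 0

end PolynomialEvaluation

/-! ### Polar coordinates -/

section Polar

variable {E : Type*} [NormedAddCommGroup E] [NormedSpace ℝ E] [FiniteDimensional ℝ E]
  [Nontrivial E] [MeasurableSpace E] [BorelSpace E] (μ : Measure E) [μ.IsAddHaarMeasure]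

local notation "dim" => Module.finrank ℝ

lemma integral_volumeIoiPow (n : ℕ) (g : ℝ → ℝ) :
    ∫ r : Set.Ioi (0 : ℝ), g r ∂(.volumeIoiPow n) = ∫ r in Set.Ioi (0 : ℝ), r ^ n * g r := by
  simp only [Measure.volumeIoiPow, ENNReal.ofReal]
  rw [integral_withDensity_eq_integral_smul (measurable_subtype_coe.pow_const _).real_toNNReal,
    integral_subtype_comap measurableSet_Ioi fun r => Real.toNNReal (r ^ n) • g r]
  refine setIntegral_congr_fun measurableSet_Ioi fun r hr => ?_
  simp only [NNReal.smul_def, smul_eq_mul, Real.coe_toNNReal _ (pow_nonneg (le_of_lt hr) n)]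

lemma integral_fun_norm_mul_of_homogeneous {m : ℕ} {f : E → ℝ}
    (hf : ∀ (r : ℝ) (x : E), f (r • x) = r ^ m * f x) (g : ℝ → ℝ) :
    ∫ x, g ‖x‖ * f x ∂μ =
      (∫ r in Set.Ioi (0 : ℝ), r ^ (m + (dim E - 1)) * g r) * ∫ y, f y ∂μ.toSphere := by
  calc
    ∫ x, g ‖x‖ * f x ∂μ
      = ∫ x : ({0}ᶜ : Set E), g ‖x.1‖ * f x ∂(μ.comap Subtype.val) := by
        rw [integral_subtype_comap (measurableSet_singleton _).compl fun x => g ‖x‖ * f x,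
          restrict_compl_singleton]
    _ = ∫ z : sphere (0 : E) 1 × Set.Ioi (0 : ℝ), f z.1 * (z.2.1 ^ m * g z.2)
          ∂μ.toSphere.prod (.volumeIoiPow (dim E - 1)) := by
        rw [← μ.measurePreserving_homeomorphUnitSphereProd.integral_comp
          (Homeomorph.measurableEmbedding _)]
        refine integral_congr_ae (.of_forall fun x => ?_)
        have hx : ‖x.1‖ ≠ 0 := norm_ne_zero_iff.2 x.2
        simp only [homeomorphUnitSphereProd_apply_snd_coe, homeomorphUnitSphereProd_apply_fst_coe,
          hf, inv_pow]
        field_simp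
    _ = (∫ y : sphere (0 : E) 1, f y ∂μ.toSphere) *
          ∫ r : Set.Ioi (0 : ℝ), r.1 ^ m * g r ∂(.volumeIoiPow (dim E - 1)) :=
        integral_prod_mul (fun y : sphere (0 : E) 1 => f y)
          fun r : Set.Ioi (0 : ℝ) => r.1 ^ m * g r
    _ = _ := by
        rw [integral_volumeIoiPow _ fun r => r ^ m * g r, mul_comm]
        simp only [← mul_assoc, ← pow_add, add_comm]

lemma setIntegral_closedBall_fun_norm_mul_of_homogeneous {m : ℕ} {f : E → ℝ}
    (hf : ∀ (r : ℝ) (x : E), f (r • x) = r ^ m * f x) (g : ℝ → ℝ) :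
    ∫ x in closedBall 0 1, g ‖x‖ * f x ∂μ =
      (∫ r in (0 : ℝ)..1, r ^ (m + (dim E - 1)) * g r) * ∫ y, f y ∂μ.toSphere := by
  have hball : ∫ x in closedBall 0 1, g ‖x‖ * f x ∂μ =
      ∫ x, (Set.Iic 1).indicator g ‖x‖ * f x ∂μ := by
    rw [← integral_indicator measurableSet_closedBall]
    congr with x
    by_cases hx : ‖x‖ ≤ 1 <;> simp [Set.indicator, hx]
  have hradial : ∫ r in (0 : ℝ)..1, r ^ (m + (dim E - 1)) * g r =
      ∫ r in Set.Ioi (0 : ℝ), r ^ (m + (dim E - 1)) * (Set.Iic 1).indicator g r := by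
    rw [intervalIntegral.integral_of_le zero_le_one, ← integral_indicator measurableSet_Ioc,
      ← integral_indicator measurableSet_Ioi]
    congr with r
    by_cases h0 : 0 < r <;> by_cases h1 : r ≤ 1 <;> simp [Set.indicator, h0, h1]
  rw [hball, hradial, integral_fun_norm_mul_of_homogeneous μ hf]

end Polar

/-! ### The divergence theorem for polynomials on the unit ball -/

section Divergence

variable {d : ℕ}

lemma integrable_pow_mul_exp_neg_sq (k : ℕ) :
    Integrable fun t : ℝ => t ^ k * Real.exp (-t ^ 2) := by
  simpa using integrable_rpow_mul_exp_neg_mul_sq one_pos (s := k)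
    (neg_one_lt_zero.trans_le k.cast_nonneg)

lemma integrable_pEval_mul_exp_neg_norm_sq (p : MvPolynomial (Fin d) ℝ) :
    Integrable fun x : Edim d => pEval p x * Real.exp (-‖x‖ ^ 2) := by
  induction p using MvPolynomial.induction_on' with
  | monomial s a =>
    have hprod : Integrable fun x : Fin d → ℝ => ∏ i, x i ^ s i * Real.exp (-x i ^ 2) :=
      .fintype_prod (f := fun i t => t ^ s i * Real.exp (-t ^ 2)) fun i =>
        integrable_pow_mul_exp_neg_sq (s i)
    refine (((PiLp.volume_preserving_ofLp (Fin d)).integrable_comp_of_integrable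
      hprod).const_mul a).congr (.of_forall fun x => ?_)
    simp [pEval, eval_monomial, Finsupp.prod_fintype, EuclideanSpace.real_norm_sq_eq,
      Finset.prod_mul_distrib, ← Real.exp_sum, mul_assoc]
  | add p q hp hq =>
    simp only [pEval_add, add_mul]
    exact hp.add hq

lemma integral_pEval_pderiv_mul_exp_neg_norm_sq (p : MvPolynomial (Fin d) ℝ) (i : Fin d) :
    ∫ x : Edim d, pEval (pderiv i p) x * Real.exp (-‖x‖ ^ 2) =
      2 * ∫ x : Edim d, pEval (X i * p) x * Real.exp (-‖x‖ ^ 2) := by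
  let g : Edim d → ℝ := fun x => Real.exp (-‖x‖ ^ 2)
  have hg (x : Edim d) : HasFDerivAt g (g x • -(2 • innerSL ℝ x : Edim d →L[ℝ] ℝ)) x :=
    (hasStrictFDerivAt_norm_sq x).hasFDerivAt.fun_neg.exp
  have hf (x : Edim d) : fderiv ℝ (pEval p) x (EuclideanSpace.single i 1) * g x =
      pEval (pderiv i p) x * g x := by
    rw [fderiv_pEval_single]
  have hfg (x : Edim d) : pEval p x * fderiv ℝ g x (EuclideanSpace.single i 1) =
      -2 * (pEval (X i * p) x * g x) := by
    simp [(hg x).fderiv, pEval_mul, pEval_X, EuclideanSpace.inner_single_right]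
    ring
  have hibp := integral_mul_fderiv_eq_neg_fderiv_mul_of_integrable
    (μ := (volume : Measure (Edim d))) (f := pEval p) (g := g) (v := EuclideanSpace.single i 1)
    (by simpa only [hf] using integrable_pEval_mul_exp_neg_norm_sq _)
    (by simpa only [hfg] using (integrable_pEval_mul_exp_neg_norm_sq _).const_mul (-2))
    (integrable_pEval_mul_exp_neg_norm_sq p)
    (fun x _ => (hasFDerivAt_pEval p x).differentiableAt) (fun x _ => (hg x).differentiableAt)
  simp only [hf, hfg, integral_const_mul] at hibp
  linarith

lemma integral_pow_mul_exp_neg_sq (k : ℕ) :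
    ∫ r in Set.Ioi (0 : ℝ), r ^ k * Real.exp (-r ^ 2) =
      1 / 2 * Real.Gamma (((k : ℝ) + 1) / 2) := by
  simpa using integral_rpow_mul_exp_neg_rpow (p := 2) (q := k) two_pos
    (neg_one_lt_zero.trans_le k.cast_nonneg)

lemma integrableOn_closedBall_pEval (p : MvPolynomial (Fin d) ℝ) :
    IntegrableOn (pEval p) (closedBall (0 : Edim d) 1) :=
  (continuous_pEval p).continuousOn.integrableOn_compact (isCompact_closedBall _ _)

lemma integrable_sphere_pEval (p : MvPolynomial (Fin d) ℝ) :
    Integrable (fun y : sphere (0 : Edim d) 1 => pEval p y) (sphMeasure d) :=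
  have : IsFiniteMeasure (sphMeasure d) :=
    inferInstanceAs (IsFiniteMeasure (volume : Measure (Edim d)).toSphere)
  ((continuous_pEval p).comp continuous_subtype_val).integrable_of_hasCompactSupport
    (.of_compactSpace _)

variable [NeZero d]

lemma integral_pEval_mul_exp_neg_norm_sq {m : ℕ} {p : MvPolynomial (Fin d) ℝ}
    (hp : p.IsHomogeneous m) :
    ∫ x : Edim d, pEval p x * Real.exp (-‖x‖ ^ 2) =
      1 / 2 * Real.Gamma (((m : ℝ) + d) / 2) *
        ∫ y : sphere (0 : Edim d) 1, pEval p y ∂(sphMeasure d) := by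
  have hpolar := integral_fun_norm_mul_of_homogeneous (volume : Measure (Edim d)) (pEval_smul hp)
    fun r => Real.exp (-r ^ 2)
  rw [finrank_euclideanSpace_fin, integral_pow_mul_exp_neg_sq, Nat.cast_add,
    Nat.cast_pred (NeZero.pos d), add_assoc, sub_add_cancel] at hpolar
  simpa only [mul_comm, sphMeasure] using hpolar

lemma integral_sphere_pderiv {m : ℕ} {p : MvPolynomial (Fin d) ℝ}
    (hp : p.IsHomogeneous (m + 1)) (i : Fin d) :
    ∫ y : sphere (0 : Edim d) 1, pEval (pderiv i p) y ∂(sphMeasure d) =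
      (m + d) * ∫ y : sphere (0 : Edim d) 1, pEval (X i * p) y ∂(sphMeasure d) := by
  have hpos : (0 : ℝ) < ((m : ℝ) + d) / 2 := by
    have : (0 : ℝ) < d := Nat.cast_pos.2 (NeZero.pos d)
    positivity
  have hX : (X i * p).IsHomogeneous (m + 2) := by
    simpa only [add_comm, add_left_comm] using (isHomogeneous_X ℝ i).mul hp
  have hGamma : Real.Gamma ((((m + 2 : ℕ) : ℝ) + d) / 2) =
      ((m : ℝ) + d) / 2 * Real.Gamma (((m : ℝ) + d) / 2) := by
    rw [← Real.Gamma_add_one hpos.ne']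
    congr 1
    push_cast
    ring
  have hgauss := integral_pEval_pderiv_mul_exp_neg_norm_sq p i
  rw [integral_pEval_mul_exp_neg_norm_sq (m := m) hp.pderiv,
    integral_pEval_mul_exp_neg_norm_sq hX, hGamma] at hgauss
  refine mul_left_cancel₀ (Real.Gamma_pos_of_pos hpos).ne' ?_
  linear_combination 2 * hgauss

lemma integral_sphere_X (i : Fin d) :
    ∫ y : sphere (0 : Edim d) 1, pEval (X i) y ∂(sphMeasure d) = 0 := by
  have hgauss := integral_pEval_pderiv_mul_exp_neg_norm_sq 1 i
  have hpos : 0 < Real.Gamma ((1 + (d : ℝ)) / 2) := Real.Gamma_pos_of_pos (by positivity)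
  rw [mul_one, integral_pEval_mul_exp_neg_norm_sq (isHomogeneous_X ℝ i)] at hgauss
  simpa [pEval, hpos.ne'] using hgauss

lemma integral_closedBall_of_isHomogeneous {m : ℕ} {p : MvPolynomial (Fin d) ℝ}
    (hp : p.IsHomogeneous m) :
    ∫ x in closedBall (0 : Edim d) 1, pEval p x =
      1 / (m + d) * ∫ y : sphere (0 : Edim d) 1, pEval p y ∂(sphMeasure d) := by
  have hpolar := setIntegral_closedBall_fun_norm_mul_of_homogeneous (volume : Measure (Edim d))
    (pEval_smul hp) fun _ => 1
  simpa [Nat.cast_pred (NeZero.pos d), add_assoc, sphMeasure] using hpolar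

lemma integral_closedBall_pderiv_of_isHomogeneous {m : ℕ} {p : MvPolynomial (Fin d) ℝ}
    (hp : p.IsHomogeneous m) (i : Fin d) :
    ∫ x in closedBall (0 : Edim d) 1, pEval (pderiv i p) x =
      ∫ y : sphere (0 : Edim d) 1, pEval (X i * p) y ∂(sphMeasure d) := by
  cases m with
  | zero =>
    rw [totalDegree_eq_zero_iff_eq_C.1 (Nat.le_zero.1 hp.totalDegree_le), pderiv_C]
    simp only [pEval_mul, pEval_C, integral_mul_const, integral_sphere_X]
    simp [pEval]
  | succ m =>
    have : (0 : ℝ) < m + d := by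
      have : (0 : ℝ) < d := Nat.cast_pos.2 (NeZero.pos d)
      positivity
    rw [integral_closedBall_of_isHomogeneous (m := m) hp.pderiv, integral_sphere_pderiv hp]
    field_simp

theorem integral_closedBall_pderiv (p : MvPolynomial (Fin d) ℝ) (i : Fin d) :
    ∫ x in closedBall (0 : Edim d) 1, pEval (pderiv i p) x =
      ∫ y : sphere (0 : Edim d) 1, pEval (X i * p) y ∂(sphMeasure d) := by
  induction p using MvPolynomial.induction_on' with
  | monomial s a =>
    exact integral_closedBall_pderiv_of_isHomogeneous (isHomogeneous_monomial a rfl) i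
  | add p q hp hq =>
    simp only [map_add, mul_add, pEval_add]
    rw [integral_add (integrableOn_closedBall_pEval _) (integrableOn_closedBall_pEval _),
      integral_add (integrable_sphere_pEval _) (integrable_sphere_pEval _), hp, hq]

end Divergence

/-! ### Dirichlet energy of radial times harmonic polynomials -/

/-- The radial polynomial `G(2‖x‖² - 1)`. The affine change of variable maps `‖x‖² ∈ [0, 1]` to the
interval `[-1, 1]` on which Jacobi polynomials are orthogonal. -/
def radialPoly (d : ℕ) (G : Polynomial ℝ) : MvPolynomial (Fin d) ℝ :=
  Polynomial.aeval (2 * sumSq d - 1) G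

section Energy

variable {d : ℕ}

lemma pEval_radialPoly (G : Polynomial ℝ) (x : Edim d) :
    pEval (radialPoly d G) x = G.eval (2 * ‖x‖ ^ 2 - 1) := by
  rw [radialPoly, pEval_aeval, ← pEval_sumSq]
  simp [pEval]

lemma pderiv_sumSq (i : Fin d) : pderiv i (sumSq d) = 2 * X i := by
  rw [sumSq, map_sum, Finset.sum_eq_single i]
  · simp [Derivation.leibniz_pow]
  · intro j _ hj
    simp [Derivation.leibniz_pow, pderiv_X_of_ne hj]
  · simp

lemma pderiv_radialPoly (G : Polynomial ℝ) (i : Fin d) :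
    pderiv i (radialPoly d G) = 4 * X i * radialPoly d G.derivative := by
  have hinner : pderiv i (2 * sumSq d - 1) = 4 * X i := by
    rw [two_mul, map_sub, map_add, pderiv_sumSq, pderiv_one]
    ring
  rw [radialPoly, Derivation.map_aeval, hinner, smul_eq_mul, mul_comm, radialPoly]

lemma sum_pderiv_radialPoly_sq (G : Polynomial ℝ) :
    ∑ i, pderiv i (radialPoly d G) ^ 2 = 16 * sumSq d * radialPoly d G.derivative ^ 2 := by
  simp only [pderiv_radialPoly, sumSq, mul_pow, Finset.mul_sum, Finset.sum_mul]
  norm_num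

lemma sum_pderiv_mul_sq_of_mvLaplacian_eq_zero {Y : MvPolynomial (Fin d) ℝ}
    (hY : mvLaplacian Y = 0) (T : MvPolynomial (Fin d) ℝ) :
    ∑ i, pderiv i (T * Y) ^ 2 =
      (∑ i, pderiv i T ^ 2) * Y ^ 2 + ∑ i, pderiv i (T ^ 2 * Y * pderiv i Y) := by
  have hterm (i : Fin d) : pderiv i (T ^ 2 * Y * pderiv i Y) =
      pderiv i (T * Y) ^ 2 - pderiv i T ^ 2 * Y ^ 2 + T ^ 2 * Y * pderiv i (pderiv i Y) := by
    simp only [sq, Derivation.leibniz, smul_eq_mul]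
    ring
  have hlap : ∑ i, T ^ 2 * Y * pderiv i (pderiv i Y) = 0 := by
    rw [← Finset.mul_sum, ← mvLaplacian, hY, mul_zero]
  rw [Finset.sum_congr rfl fun i _ => hterm i, Finset.sum_add_distrib, hlap,
    Finset.sum_sub_distrib, Finset.sum_mul]
  ring

variable [NeZero d] {m : ℕ} {Y : MvPolynomial (Fin d) ℝ}

lemma integral_closedBall_sum_pderiv_radialPoly_sq_mul (hY : Y.IsHomogeneous m)
    (G : Polynomial ℝ) :
    ∫ x in closedBall (0 : Edim d) 1, pEval ((∑ i, pderiv i (radialPoly d G) ^ 2) * Y ^ 2) x =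
      16 * (∫ r in (0 : ℝ)..1, r ^ (2 * m + d + 1) * G.derivative.eval (2 * r ^ 2 - 1) ^ 2) *
        ∫ y : sphere (0 : Edim d) 1, pEval Y y ^ 2 ∂(sphMeasure d) := by
  have hball (x : Edim d) : pEval ((∑ i, pderiv i (radialPoly d G) ^ 2) * Y ^ 2) x =
      16 * (‖x‖ ^ 2 * G.derivative.eval (2 * ‖x‖ ^ 2 - 1) ^ 2) * pEval (Y ^ 2) x := by
    have h16 : pEval (16 : MvPolynomial (Fin d) ℝ) x = 16 := by simp [pEval]
    rw [sum_pderiv_radialPoly_sq, pEval_mul, pEval_mul, pEval_mul, pEval_pow, pEval_sumSq,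
      pEval_radialPoly, h16, mul_assoc 16]
  have hdeg : 2 * m + d + 1 = m * 2 + (d - 1) + 2 := by
    have := NeZero.pos d
    omega
  have hradial (r : ℝ) : r ^ (m * 2 + (d - 1)) *
      (16 * (r ^ 2 * G.derivative.eval (2 * r ^ 2 - 1) ^ 2)) =
        16 * (r ^ (2 * m + d + 1) * G.derivative.eval (2 * r ^ 2 - 1) ^ 2) := by
    rw [hdeg]
    ring
  simp only [hball]
  rw [setIntegral_closedBall_fun_norm_mul_of_homogeneous volume (pEval_smul (hY.pow 2))
    fun r => 16 * (r ^ 2 * G.derivative.eval (2 * r ^ 2 - 1) ^ 2)]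
  simp only [finrank_euclideanSpace_fin, hradial, intervalIntegral.integral_const_mul, pEval_pow,
    sphMeasure]

lemma integral_closedBall_sum_pderiv_radialPoly_sq_mul_mul_pderiv (hY : Y.IsHomogeneous m)
    (G : Polynomial ℝ) :
    ∫ x in closedBall (0 : Edim d) 1,
        pEval (∑ i, pderiv i (radialPoly d G ^ 2 * Y * pderiv i Y)) x =
      m * G.eval 1 ^ 2 * ∫ y : sphere (0 : Edim d) 1, pEval Y y ^ 2 ∂(sphMeasure d) := by
  have hnormal : ∑ i, X i * (radialPoly d G ^ 2 * Y * pderiv i Y) =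
      radialPoly d G ^ 2 * Y * (m • Y) := by
    rw [← hY.sum_X_mul_pderiv, Finset.mul_sum]
    exact Finset.sum_congr rfl fun i _ => mul_left_comm ..
  have hsphere (y : sphere (0 : Edim d) 1) :
      pEval (∑ i, X i * (radialPoly d G ^ 2 * Y * pderiv i Y)) y =
        m * G.eval 1 ^ 2 * pEval Y y ^ 2 := by
    rw [hnormal, nsmul_eq_mul, ← map_natCast (C (σ := Fin d) (R := ℝ))]
    simp only [pEval_mul, pEval_pow, pEval_C, pEval_radialPoly, norm_eq_of_mem_sphere y]
    norm_num
    ring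
  simp only [← integral_const_mul, ← hsphere]
  simp only [pEval_sum]
  rw [integral_finsetSum _ fun i _ => integrableOn_closedBall_pEval _,
    integral_finsetSum _ fun i _ => integrable_sphere_pEval _]
  exact Finset.sum_congr rfl fun i _ => integral_closedBall_pderiv _ i

theorem integral_closedBall_inner_gradient_radialPoly_mul (hY : Y.IsHomogeneous m)
    (hL : mvLaplacian Y = 0) (G : Polynomial ℝ) :
    ∫ x in closedBall (0 : Edim d) 1, ⟪gradient (pEval (radialPoly d G * Y)) x,
        gradient (pEval (radialPoly d G * Y)) x⟫ =
      (16 * (∫ r in (0 : ℝ)..1, r ^ (2 * m + d + 1) * G.derivative.eval (2 * r ^ 2 - 1) ^ 2) +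
        m * G.eval 1 ^ 2) * ∫ y : sphere (0 : Edim d) 1, pEval Y y ^ 2 ∂(sphMeasure d) := by
  simp only [inner_gradient_pEval_self, sum_pderiv_mul_sq_of_mvLaplacian_eq_zero hL, pEval_add]
  rw [integral_add (integrableOn_closedBall_pEval _) (integrableOn_closedBall_pEval _),
    integral_closedBall_sum_pderiv_radialPoly_sq_mul hY,
    integral_closedBall_sum_pderiv_radialPoly_sq_mul_mul_pderiv hY, add_mul]

end Energy

/-! ### Sobolev norms -/

section Sobolev

variable {d : ℕ}

/- In `innerI` and `innerII` the first integral sign also binds the summand after `+`. The next two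
lemmas only concern functions for which that summand vanishes. -/
lemma innerI_of_eq_zero_on_sphere (lam : ℝ) {f g : Edim d → ℝ}
    (hf : ∀ y : sphere (0 : Edim d) 1, f y = 0) :
    innerI d lam f g =
      lam / omegaD d * ∫ x in closedBall (0 : Edim d) 1, ⟪gradient f x, gradient g x⟫ := by
  simp [innerI, hf]

lemma innerII_of_apply_zero (lam : ℝ) {f g : Edim d → ℝ} (hf : f 0 = 0) :
    innerII d lam f g =
      lam / omegaD d * ∫ x in closedBall (0 : Edim d) 1, ⟪gradient f x, gradient g x⟫ := by
  simp [innerII, hf]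

variable [NeZero d]

lemma omegaD_pos : 0 < omegaD d := by
  have hd : (0 : ℝ) < d := Nat.cast_pos.2 (NeZero.pos d)
  have : 0 < Real.Gamma ((d : ℝ) / 2) := Real.Gamma_pos_of_pos (by positivity)
  unfold omegaD
  positivity

lemma sphMeasure_real_univ : (sphMeasure d).real Set.univ = omegaD d := by
  have hd : (0 : ℝ) < d := Nat.cast_pos.2 (NeZero.pos d)
  have : 0 < Real.Gamma ((d : ℝ) / 2) := Real.Gamma_pos_of_pos (by positivity)
  have hpi : Real.sqrt Real.pi ^ d = Real.pi ^ ((d : ℝ) / 2) := by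
    rw [Real.sqrt_eq_rpow, ← Real.rpow_mul_natCast Real.pi_pos.le]
    ring_nf
  rw [sphMeasure, Measure.toSphere_real_apply_univ, finrank_euclideanSpace_fin, measureReal_def,
    EuclideanSpace.volume_ball, Fintype.card_fin, hpi, Real.Gamma_add_one (by positivity),
    ENNReal.ofReal_one, one_pow, one_mul, ENNReal.toReal_ofReal (by positivity), omegaD]
  field_simp

theorem innerII_radialPoly_mul_self {m N : ℕ} {c : ℝ} (lam : ℝ) {Y : MvPolynomial (Fin d) ℝ}
    (hY : Y.IsHomogeneous m) (hL : mvLaplacian Y = 0) {G : Polynomial ℝ}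
    (hG : G.derivative = Polynomial.C c * jacobiPoly N 0 (m + d / 2))
    (hsphere : m = 0 ∨ G.eval 1 = 0) (hzero : m ≠ 0 ∨ G.eval (-1) = 0) :
    innerII d lam (pEval (radialPoly d G * Y)) (pEval (radialPoly d G * Y)) =
      8 * c ^ 2 * lam / (2 * N + m + 1 + d / 2) *
        ((1 / omegaD d) * ∫ y : sphere (0 : Edim d) 1, pEval Y y * pEval Y y ∂(sphMeasure d)) := by
  have horigin : pEval (radialPoly d G * Y) (0 : Edim d) = 0 := by
    rw [pEval_mul, pEval_radialPoly]
    rcases hzero with hm | hG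
    · rw [pEval_zero_of_isHomogeneous hY hm, mul_zero]
    · norm_num [hG]
  have hboundary : (m : ℝ) * G.eval 1 ^ 2 = 0 := by
    rcases hsphere with hm | hG <;> simp [*]
  have hradial : ∫ r in (0 : ℝ)..1, r ^ (2 * m + d + 1) * G.derivative.eval (2 * r ^ 2 - 1) ^ 2 =
      c ^ 2 / (2 * (2 * N + m + 1 + d / 2)) := by
    have hnorm := integral_pow_mul_jacobiPoly_sq N (2 * m + d)
    rw [show ((2 * m + d : ℕ) : ℝ) / 2 = m + d / 2 by push_cast; ring] at hnorm
    simp only [hG, Polynomial.eval_mul, Polynomial.eval_C, mul_pow, mul_left_comm _ (c ^ 2),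
      intervalIntegral.integral_const_mul, hnorm]
    rw [show (2 * N + (m + d / 2) + 1 : ℝ) = 2 * N + m + 1 + d / 2 by ring, mul_one_div]
  rw [innerII_of_apply_zero lam horigin, integral_closedBall_inner_gradient_radialPoly_mul hY hL G,
    hradial, hboundary]
  simp only [← sq]
  have : (0 : ℝ) < 2 * N + m + 1 + d / 2 := by positivity
  field_simp
  ring

end Sobolev

/-- The radial factor of `U_{j,ν}^n`, in the variable `2‖x‖² - 1`: it is
`u(t) = (1 - t) / 2 * P_N^{(1,b)}(t)`, where `N = j - 1` and `b = n - 2j + (d - 2) / 2`. -/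
def uPoly (N : ℕ) (b : ℝ) : Polynomial ℝ :=
  Polynomial.C 2⁻¹ * ((1 - Polynomial.X) * jacobiPoly N 1 b)

lemma eval_one_uPoly (N : ℕ) (b : ℝ) : (uPoly N b).eval 1 = 0 := by
  simp [uPoly]

lemma derivative_uPoly (N : ℕ) (b : ℝ) :
    (uPoly N b).derivative = Polynomial.C (-((N + 1 : ℝ) / 2)) * jacobiPoly N 0 (b + 1) := by
  rw [uPoly, Polynomial.derivative_C_mul, derivative_one_sub_X_mul_jacobiPoly, ← mul_assoc,
    ← Polynomial.C_mul]
  ring_nf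

lemma Upoly_succ (d : ℕ) (Y : (m : ℕ) → Fin (sigmaDim d m) → MvPolynomial (Fin d) ℝ)
    (n N : ℕ) (ν : Fin (sigmaDim d (n - 2 * (N + 1)))) :
    Upoly d Y n (N + 1) ν =
      radialPoly d (uPoly N (n - 2 * (N + 1 : ℕ) + ((d : ℝ) - 2) / 2)) *
        Y (n - 2 * (N + 1)) ν := by
  have hfactor : C (σ := Fin d) (2⁻¹ : ℝ) * (1 - (2 * sumSq d - 1)) = 1 - sumSq d := by
    have h2 : C (σ := Fin d) (2⁻¹ : ℝ) * 2 = 1 := by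
      rw [← map_ofNat C, ← C_mul, inv_mul_cancel₀ two_ne_zero, C_1]
    linear_combination (1 - sumSq d) * h2
  rw [Upoly, if_neg N.succ_ne_zero, radialPoly, uPoly, map_mul, map_mul, map_sub, map_one,
    Polynomial.aeval_C, Polynomial.aeval_X, algebraMap_eq, ← mul_assoc (C _), hfactor,
    Nat.add_sub_cancel]

lemma derivative_polyAntideriv (p : Polynomial ℝ) : (polyAntideriv p).derivative = p := by
  conv_rhs => rw [← Polynomial.sum_C_mul_X_pow_eq p]
  rw [polyAntideriv, Polynomial.sum_def, Polynomial.sum_def, Polynomial.derivative_sum]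
  refine Finset.sum_congr rfl fun n _ => ?_
  have hn : (n : ℝ) + 1 ≠ 0 := by positivity
  rw [Polynomial.derivative_C_mul_X_pow, Nat.cast_add_one, div_mul_cancel₀ _ hn,
    Nat.add_sub_cancel]

lemma derivative_qPoly_succ (d N : ℕ) :
    (qPoly d (N + 1)).derivative = jacobiPoly N 0 (d / 2) := by
  simp [qPoly, derivative_polyAntideriv]

lemma eval_neg_one_qPoly_succ (d N : ℕ) : (qPoly d (N + 1)).eval (-1) = 0 := by
  simp [qPoly]

section Main

variable {d : ℕ} (lam : ℝ)
  {Y : (m : ℕ) → Fin (sigmaDim d m) → MvPolynomial (Fin d) ℝ}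

lemma innerI_Upoly_succ_self_eq_innerII (hYhom : ∀ m ν, (Y m ν).IsHomogeneous m) {n N : ℕ}
    (hn : 2 * (N + 1) < n) (ν : Fin (sigmaDim d (n - 2 * (N + 1)))) :
    innerI d lam (pEval (Upoly d Y n (N + 1) ν)) (pEval (Upoly d Y n (N + 1) ν)) =
      innerII d lam (pEval (Upoly d Y n (N + 1) ν)) (pEval (Upoly d Y n (N + 1) ν)) := by
  rw [Upoly_succ, innerI_of_eq_zero_on_sphere, innerII_of_apply_zero]
  · rw [pEval_mul, pEval_zero_of_isHomogeneous (hYhom _ ν) (by omega), mul_zero]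
  · intro y
    rw [pEval_mul, pEval_radialPoly, norm_eq_of_mem_sphere]
    norm_num [eval_one_uPoly]

variable [NeZero d]

lemma innerII_Upoly_succ_self (hYhom : ∀ m ν, (Y m ν).IsHomogeneous m)
    (hYharm : ∀ m ν, mvLaplacian (Y m ν) = 0) {n N : ℕ} (hn : 2 * (N + 1) < n)
    (ν : Fin (sigmaDim d (n - 2 * (N + 1)))) :
    innerII d lam (pEval (Upoly d Y n (N + 1) ν)) (pEval (Upoly d Y n (N + 1) ν)) =
      2 * ((N + 1 : ℕ) : ℝ) ^ 2 * lam / ((n : ℝ) + ((d : ℝ) - 2) / 2) *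
        ((1 / omegaD d) * ∫ y : sphere (0 : Edim d) 1,
          pEval (Y (n - 2 * (N + 1)) ν) y * pEval (Y (n - 2 * (N + 1)) ν) y ∂(sphMeasure d)) := by
  have hdeg : ((n - 2 * (N + 1) : ℕ) : ℝ) = n - 2 * (N + 1 : ℕ) := by
    rw [Nat.cast_sub hn.le, Nat.cast_mul, Nat.cast_two]
  have hderiv := derivative_uPoly N (n - 2 * (N + 1 : ℕ) + ((d : ℝ) - 2) / 2)
  rw [show n - 2 * (N + 1 : ℕ) + ((d : ℝ) - 2) / 2 + 1 = (n - 2 * (N + 1) : ℕ) + d / 2 by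
    rw [hdeg]; ring] at hderiv
  rw [Upoly_succ, innerII_radialPoly_mul_self lam (hYhom _ ν) (hYharm _ ν) hderiv
    (.inr (eval_one_uPoly _ _)) (.inl (by omega)), hdeg]
  push_cast
  ring_nf

lemma innerII_radialPoly_qPoly_succ_self (N : ℕ) :
    innerII d lam (pEval (radialPoly d (qPoly d (N + 1))))
        (pEval (radialPoly d (qPoly d (N + 1)))) =
      8 * lam / (2 * N + 1 + d / 2) := by
  have hone (x : Edim d) : pEval (1 : MvPolynomial (Fin d) ℝ) x = 1 := by simp [pEval]
  have h := innerII_radialPoly_mul_self (m := 0) (N := N) (c := 1) lam (isHomogeneous_one _ _)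
    (by simp [mvLaplacian]) (by simpa using derivative_qPoly_succ d N) (.inl rfl)
    (.inr (eval_neg_one_qPoly_succ d N))
  simpa [hone, sphMeasure_real_univ, omegaD_pos.ne'] using h

end Main

theorem stmt11_general (d : ℕ) [NeZero d] (lam : ℝ)
    (Y : (m : ℕ) → Fin (sigmaDim d m) → MvPolynomial (Fin d) ℝ)
    (hYhom : ∀ m ν, (Y m ν).IsHomogeneous m)
    (hYharm : ∀ m ν, mvLaplacian (Y m ν) = 0) :
    (∀ (n j : ℕ), 1 ≤ j → 2 * j < n → ∀ (ν : Fin (sigmaDim d (n - 2 * j))),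
      innerII d lam (pEval (Vpoly d Y n j ν)) (pEval (Vpoly d Y n j ν)) =
          innerI d lam (pEval (Upoly d Y n j ν)) (pEval (Upoly d Y n j ν)) ∧
        innerII d lam (pEval (Vpoly d Y n j ν)) (pEval (Vpoly d Y n j ν)) =
          2 * (j : ℝ) ^ 2 * lam / ((n : ℝ) + ((d : ℝ) - 2) / 2) *
            ((1 / omegaD d) * ∫ y : sphere (0 : Edim d) 1,
              pEval (Y (n - 2 * j) ν) y * pEval (Y (n - 2 * j) ν) y ∂(sphMeasure d))) ∧
    (∀ n : ℕ, 1 ≤ n → Even n → ∀ (ν : Fin (sigmaDim d (n - 2 * (n / 2)))),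
      innerII d lam (pEval (Vpoly d Y n (n / 2) ν)) (pEval (Vpoly d Y n (n / 2) ν)) =
        8 * lam / ((n : ℝ) + ((d : ℝ) - 2) / 2)) := by
  refine ⟨fun n j hj hjn ν => ?_, fun n hn hev ν => ?_⟩
  · obtain ⟨N, rfl⟩ := Nat.exists_eq_add_of_le' hj
    rw [Vpoly, if_neg hjn.ne]
    exact ⟨(innerI_Upoly_succ_self_eq_innerII lam hYhom hjn ν).symm,
      innerII_Upoly_succ_self lam hYhom hYharm hjn ν⟩
  · obtain ⟨N, rfl⟩ : ∃ N, n = 2 * (N + 1) := by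
      obtain ⟨k, rfl⟩ := hev
      exact ⟨k - 1, by omega⟩
    rw [Vpoly, if_pos (by omega), show 2 * (N + 1) / 2 = N + 1 by omega, ← radialPoly,
      innerII_radialPoly_qPoly_succ_self]
    push_cast
    ring_nf

/-- the `⟨·,·⟩_II`-norms of the polynomials `V_{j,ν}^n`: for
`1 ≤ j ≤ ⌊(n-1)/2⌋`, `⟨V_{j,ν}^n, V_{j,ν}^n⟩_II = ⟨U_{j,ν}^n, U_{j,ν}^n⟩_I
= 2j²λ/(n+(d-2)/2)`, and for `n ≥ 1` even, `⟨V_{n/2}^n, V_{n/2}^n⟩_II = 8λ/(n+(d-2)/2)`. -/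
theorem stmt11 (d : ℕ) (hd : 2 ≤ d) (lam : ℝ) (hlam : 0 < lam)
    (Y : (m : ℕ) → Fin (sigmaDim d m) → MvPolynomial (Fin d) ℝ)
    (hYhom : ∀ m ν, (Y m ν).IsHomogeneous m)
    (hYharm : ∀ m ν, mvLaplacian (Y m ν) = 0)
    (hYon : ∀ (m k : ℕ) (ν : Fin (sigmaDim d m)) (μ : Fin (sigmaDim d k)),
      (1 / omegaD d) * ∫ y : sphere (0 : Edim d) 1,
          pEval (Y m ν) y * pEval (Y k μ) y ∂(sphMeasure d) =
        if m = k ∧ (ν : ℕ) = (μ : ℕ) then 1 else 0)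
    :
    (∀ (n j : ℕ), 1 ≤ j → 2 * j < n → ∀ (ν : Fin (sigmaDim d (n - 2 * j))),
      innerII d lam (pEval (Vpoly d Y n j ν)) (pEval (Vpoly d Y n j ν)) =
          innerI d lam (pEval (Upoly d Y n j ν)) (pEval (Upoly d Y n j ν)) ∧
        innerII d lam (pEval (Vpoly d Y n j ν)) (pEval (Vpoly d Y n j ν)) =
          2 * (j : ℝ) ^ 2 * lam / ((n : ℝ) + ((d : ℝ) - 2) / 2)) ∧
    (∀ n : ℕ, 1 ≤ n → Even n → ∀ (ν : Fin (sigmaDim d (n - 2 * (n / 2)))),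
      innerII d lam (pEval (Vpoly d Y n (n / 2) ν)) (pEval (Vpoly d Y n (n / 2) ν)) =
        8 * lam / ((n : ℝ) + ((d : ℝ) - 2) / 2)) := by
  have : NeZero d := ⟨by omega⟩
  simpa only [hYon, and_self, if_true, mul_one] using stmt11_general d lam Y hYhom hYharm
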